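/- Let g ∈ C^∞(ℝ) be strictly increasing with g(0)=0 and g'(0)=0. Let φ_N ∈ L²(𝕋²) be such that its Fourier coefficients φ̂_N are supported in B(0,N) = {k ∈ ℤ² : |k| ≤ N}, and let I ⊂ ℝ be a finite interval centered at zero. Then for every ε>0 there is a constant C = C(ε,I), independent of N and φ_N, such that ‖ g'(t)^{1/4} S(t)φ_N ‖_{L⁴(I×𝕋²)} ≤ C N^ε ‖φ_N‖_{L²(𝕋²)}. -/

import Mathlib

/-!
The weight `g'` is the Jacobian of the time change `s = g(t)`, which turns the fourth power of the
weighted norm into the `L⁴` norm of the free evolution `P(s, x) = ∑ φ̂(k) e^{i(k·x - s|k|²)}` over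
`g(I) × 𝕋²`. Since `P` is `2π`-periodic in `s`, a bounded set `g(I)` costs at most a fixed number of
periods.

On the torus `|P|⁴ = |P²|²`, and the frequencies of `P²` are sums of two points of the paraboloid
`{(-|k|², k)}`. By Parseval and Cauchy–Schwarz it remains to bound the number of pairs `(k, l)` with
given sum. For those `|k - l|²` is constant by the parallelogram law, so they are at most as many as
the lattice points on a circle of radius at most `2N`. Unique factorization in `ℤ[i]` makes that
number submultiplicative on coprime arguments and at most `r(1) (e + 1)²` at prime powers `p^e`,
hence `O(N^ε)`. Bessel's inequality bounds the coefficients by `‖φ‖_{L²}`.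
-/

open MeasureTheory Real Set Filter
open scoped ENNReal NNReal

noncomputable section

/-- The Euclidean length `|k|` of a frequency `k ∈ ℤ²`. -/
def zAbs2 (k : ℤ × ℤ) : ℝ := Real.sqrt ((k.1 : ℝ) ^ 2 + (k.2 : ℝ) ^ 2)

/-- A function on `𝕋²`, modelled as a `2π`-periodic function on `ℝ²`. -/
def Periodic2 (φ : ℝ → ℝ → ℂ) : Prop :=
  ∀ x1 x2 : ℝ, φ (x1 + 2 * π) x2 = φ x1 x2 ∧ φ x1 (x2 + 2 * π) = φ x1 x2

/-- Fourier coefficient `φ̂(k) = ∫_{𝕋²} e^{-ik·x} φ(x) dx`. -/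
def fCoeff2 (φ : ℝ → ℝ → ℂ) (k : ℤ × ℤ) : ℂ :=
  ∫ x1 in (0:ℝ)..(2 * π), ∫ x2 in (0:ℝ)..(2 * π),
    Complex.exp (-Complex.I * (((k.1 : ℝ) * x1 + (k.2 : ℝ) * x2 : ℝ) : ℂ)) * φ x1 x2

/-- The Sobolev `H^s(𝕋²)` norm. -/
def HsNorm2 (s : ℝ) (φ : ℝ → ℝ → ℂ) : ℝ≥0∞ :=
  (∑' k : ℤ × ℤ, ENNReal.ofReal ((1 + zAbs2 k) ^ (2 * s) * ‖fCoeff2 φ k‖ ^ 2)) ^ ((1:ℝ)/2)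

/-- Space-time Fourier transform with time transform subordinate to `g`:
`ũ(τ,k) = ∫ e^{-i g(t) τ} (u(t,·))^(k) dt`.  For `g = id` this is the standard transform. -/
def tFT2 (g : ℝ → ℝ) (u : ℝ → ℝ → ℝ → ℂ) (τ : ℝ) (k : ℤ × ℤ) : ℂ :=
  ∫ t : ℝ, Complex.exp (-Complex.I * ((g t * τ : ℝ) : ℂ)) * fCoeff2 (u t) k

/-- The `X^{s,b}_g(ℝ×𝕋²)` norm. -/
def XsbgNorm2 (g : ℝ → ℝ) (s b : ℝ) (u : ℝ → ℝ → ℝ → ℂ) : ℝ≥0∞ :=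
  (∑' k : ℤ × ℤ,
      ENNReal.ofReal ((1 + zAbs2 k) ^ (2 * s)) *
        ∫⁻ τ : ℝ,
          ENNReal.ofReal ((1 + |τ - zAbs2 k ^ 2|) ^ (2 * b) * ‖tFT2 g u τ k‖ ^ 2)) ^ ((1:ℝ)/2)

/-- The standard `X^{s,b}(ℝ×𝕋²)` norm. -/
def XsbNorm2 (s b : ℝ) (u : ℝ → ℝ → ℝ → ℂ) : ℝ≥0∞ := XsbgNorm2 id s b u

/-- Time derivative `∂_t u`. -/
def tderiv2 (u : ℝ → ℝ → ℝ → ℂ) (t x1 x2 : ℝ) : ℂ := deriv (fun r => u r x1 x2) t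

/-- Second derivative in the first space variable, `∂²_{x₁}`. -/
def dX1 (φ : ℝ → ℝ → ℂ) (x1 x2 : ℝ) : ℂ := iteratedDeriv 2 (fun y => φ y x2) x1

/-- Second derivative in the second space variable, `∂²_{x₂}`. -/
def dX2 (φ : ℝ → ℝ → ℂ) (x1 x2 : ℝ) : ℂ := iteratedDeriv 2 (fun y => φ x1 y) x2

/-- `u ∈ C([-T,T]; H^s(𝕋²))`: finite `H^s` norms and continuity in time for the `H^s` metric. -/
def ContHs2 (s T : ℝ) (u : ℝ → ℝ → ℝ → ℂ) : Prop :=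
  (∀ t ∈ Icc (-T) T, HsNorm2 s (u t) < ⊤) ∧
    ∀ t₀ ∈ Icc (-T) T,
      Tendsto (fun t => HsNorm2 s (fun x1 x2 => u t x1 x2 - u t₀ x1 x2))
        (nhdsWithin t₀ (Icc (-T) T)) (nhds 0)

/-- The solution operator `S(t)φ = Σ_k e^{ik·x} e^{-i g(t)|k|²} φ̂(k)`. -/
def Sop2 (g : ℝ → ℝ) (φ : ℝ → ℝ → ℂ) (t x1 x2 : ℝ) : ℂ :=
  ∑' k : ℤ × ℤ,
    Complex.exp (Complex.I * (((k.1 : ℝ) * x1 + (k.2 : ℝ) * x2 : ℝ) : ℂ)) *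
      Complex.exp (-Complex.I * ((g t * ((k.1 : ℝ) ^ 2 + (k.2 : ℝ) ^ 2) : ℝ) : ℂ)) *
        fCoeff2 φ k

/-- The two-parameter solution operator `S(t,s)φ = Σ_k e^{ik·x} e^{-i(g(t)-g(s))|k|²} φ̂(k)`. -/
def Sop2' (g : ℝ → ℝ) (φ : ℝ → ℝ → ℂ) (t s' x1 x2 : ℝ) : ℂ :=
  ∑' k : ℤ × ℤ,
    Complex.exp (Complex.I * (((k.1 : ℝ) * x1 + (k.2 : ℝ) * x2 : ℝ) : ℂ)) *
      Complex.exp (-Complex.I * (((g t - g s') * ((k.1 : ℝ) ^ 2 + (k.2 : ℝ) ^ 2) : ℝ) : ℂ)) *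
        fCoeff2 φ k

/-- The `L^p(𝕋²)` norm. -/
def LpT2 (p : ℝ) (φ : ℝ → ℝ → ℂ) : ℝ≥0∞ :=
  (∫⁻ x1 in Ioc (0:ℝ) (2 * π), ∫⁻ x2 in Ioc (0:ℝ) (2 * π),
      ENNReal.ofReal (‖φ x1 x2‖ ^ p)) ^ ((1:ℝ)/p)

/-- The `L^p(I×𝕋²)` norm. -/
def LpIT2 (p : ℝ) (I : Set ℝ) (u : ℝ → ℝ → ℝ → ℂ) : ℝ≥0∞ :=
  (∫⁻ t in I, ∫⁻ x1 in Ioc (0:ℝ) (2 * π), ∫⁻ x2 in Ioc (0:ℝ) (2 * π),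
      ENNReal.ofReal (‖u t x1 x2‖ ^ p)) ^ ((1:ℝ)/p)

/-- A smooth cutoff function adapted to the interval `[r₁,r₂]`:
it is `1` on `[r₁,r₂]`, takes values in `[0,1]` and is supported in `[2r₁,2r₂]`. -/
def AdaptedCutoff (χ : ℝ → ℝ) (r₁ r₂ : ℝ) : Prop :=
  ContDiff ℝ (⊤ : ℕ∞) χ ∧ (∀ t ∈ Icc r₁ r₂, χ t = 1) ∧ (∀ t, χ t ∈ Icc (0:ℝ) 1) ∧
    tsupport χ ⊆ Icc (2 * r₁) (2 * r₂)

/-- Time Fourier transform subordinate to `g`: `f̃(τ) = ∫ e^{-i g(t) τ} f(t) dt`. -/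
def tFTt (g : ℝ → ℝ) (f : ℝ → ℂ) (τ : ℝ) : ℂ :=
  ∫ t : ℝ, Complex.exp (-Complex.I * ((g t * τ : ℝ) : ℂ)) * f t

/-- The `H^{1,b}_g(ℝ)` norm `∫ ⟨τ⟩^b |f̃(τ)| dτ`; for `g = id` it is the `H^{1,b}` norm. -/
def H1bgNorm (g : ℝ → ℝ) (b : ℝ) (f : ℝ → ℂ) : ℝ≥0∞ :=
  ∫⁻ τ : ℝ, ENNReal.ofReal ((1 + τ ^ 2) ^ (b / 2) * ‖tFTt g f τ‖)

/-- The `H^b(ℝ)` norm in time, `(∫ ⟨τ⟩^{2b}|f̂(τ)|² dτ)^{1/2}`. -/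
def HbtNorm (b : ℝ) (f : ℝ → ℂ) : ℝ≥0∞ :=
  (∫⁻ τ : ℝ, ENNReal.ofReal ((1 + τ ^ 2) ^ b * ‖tFTt id f τ‖ ^ 2)) ^ ((1:ℝ)/2)

/-- The mixed norm `H^{p₁}_t H^{s₁}_x` on `ℝ × 𝕋²`. -/
def HptHsxNorm (p₁ s₁ : ℝ) (v : ℝ → ℝ → ℝ → ℂ) : ℝ≥0∞ :=
  (∑' k : ℤ × ℤ,
      ENNReal.ofReal ((1 + zAbs2 k) ^ (2 * s₁)) *
        ∫⁻ τ : ℝ, ENNReal.ofReal ((1 + τ ^ 2) ^ p₁ * ‖tFT2 id v τ k‖ ^ 2)) ^ ((1:ℝ)/2)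

/-! ### Submultiplicative functions -/

theorem exists_mul_add_one_pow_le_mul_pow (A : ℝ) (k : ℕ) {q : ℝ} (hq : 1 < q) :
    ∃ K, 1 ≤ K ∧ ∀ e : ℕ, A * ((e : ℝ) + 1) ^ k ≤ K * q ^ e := by
  have hq0 : 0 < q := zero_lt_one.trans hq
  have hlim : Tendsto (fun e : ℕ => A * ((e : ℝ) + 1) ^ k / q ^ e) atTop (nhds 0) := by
    have h := ((tendsto_pow_const_div_const_pow_of_one_lt k hq).comp
      (tendsto_add_atTop_nat 1)).const_mul (A * q)
    rw [mul_zero] at h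
    refine h.congr fun e => ?_
    simp only [Function.comp_apply, Nat.cast_add, Nat.cast_one, pow_succ]
    field_simp
  obtain ⟨K, hK⟩ := hlim.bddAbove_range
  refine ⟨max K 1, le_max_right _ _, fun e => ?_⟩
  rw [← div_le_iff₀ (pow_pos hq0 e)]
  exact (hK (mem_range_self e)).trans (le_max_left _ _)

theorem mul_add_one_pow_le_mul_two_pow_pow {A : ℝ} (hA : 1 ≤ A) (k : ℕ) {e : ℕ} (he : e ≠ 0) :
    A * ((e : ℝ) + 1) ^ k ≤ (A * 2 ^ k) ^ e := by
  have h2 : (e : ℝ) + 1 ≤ 2 ^ e := by exact_mod_cast Nat.lt_two_pow_self (n := e)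
  calc A * ((e : ℝ) + 1) ^ k ≤ A ^ e * (2 ^ e) ^ k := by
        gcongr
        exact le_self_pow₀ hA he
    _ = (A * 2 ^ k) ^ e := by rw [mul_pow, pow_right_comm]

theorem exists_mul_add_one_pow_le_ite_mul_rpow (A : ℝ) (k : ℕ) {δ : ℝ} (hδ : 0 < δ) :
    ∃ K, 1 ≤ K ∧ ∃ P : ℕ, ∀ p e : ℕ, 2 ≤ p → e ≠ 0 →
      A * ((e : ℝ) + 1) ^ k ≤ (if p < P then K else 1) * ((p ^ e : ℕ) : ℝ) ^ δ := by
  obtain ⟨K, hK1, hK⟩ :=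
    exists_mul_add_one_pow_le_mul_pow A k (one_lt_rpow (one_lt_two (α := ℝ)) hδ)
  obtain ⟨P, hP⟩ := eventually_atTop.1 (((tendsto_rpow_atTop hδ).comp
    tendsto_natCast_atTop_atTop).eventually_ge_atTop (max A 1 * 2 ^ k))
  refine ⟨K, hK1, P, fun p e hp he => ?_⟩
  have hpow : ((p ^ e : ℕ) : ℝ) ^ δ = ((p : ℝ) ^ δ) ^ e := by
    rw [Nat.cast_pow, rpow_pow_comm p.cast_nonneg]
  rw [hpow]
  split_ifs with hpP
  · have h2p : (2 : ℝ) ≤ p := mod_cast hp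
    exact (hK e).trans (by gcongr)
  · calc A * ((e : ℝ) + 1) ^ k ≤ max A 1 * ((e : ℝ) + 1) ^ k := by
          gcongr
          exact le_max_left _ _
      _ ≤ (max A 1 * 2 ^ k) ^ e := mul_add_one_pow_le_mul_two_pow_pow (le_max_right _ _) k he
      _ ≤ 1 * ((p : ℝ) ^ δ) ^ e := by
          rw [one_mul]
          gcongr
          exact hP p (not_lt.1 hpP)

theorem le_prod_primeFactors_mul_rpow_of_submultiplicative {f w : ℕ → ℝ} {δ : ℝ}
    (hf : ∀ n, 0 ≤ f n) (hmul : ∀ a b : ℕ, a.Coprime b → f (a * b) ≤ f a * f b)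
    (hpow : ∀ p e : ℕ, p.Prime → e ≠ 0 → f (p ^ e) ≤ w p * ((p ^ e : ℕ) : ℝ) ^ δ)
    {n : ℕ} (hn : 1 < n) : f n ≤ (∏ p ∈ n.primeFactors, w p) * (n : ℝ) ^ δ := by
  induction n using Nat.recOnPosPrimePosCoprime with
  | zero | one => omega
  | prime_pow p e hp he =>
    simpa [Nat.primeFactors_prime_pow he.ne' hp] using hpow p e hp he.ne'
  | coprime a b ha hb hab iha ihb =>
    calc f (a * b) ≤ f a * f b := hmul a b hab
      _ ≤ ((∏ p ∈ a.primeFactors, w p) * (a : ℝ) ^ δ) *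
            ((∏ p ∈ b.primeFactors, w p) * (b : ℝ) ^ δ) :=
          mul_le_mul (iha ha) (ihb hb) (hf b) ((hf a).trans (iha ha))
      _ = (∏ p ∈ (a * b).primeFactors, w p) * ((a * b : ℕ) : ℝ) ^ δ := by
          rw [hab.primeFactors_mul, Finset.prod_union hab.disjoint_primeFactors, Nat.cast_mul,
            mul_rpow a.cast_nonneg b.cast_nonneg]
          ring

/- Only the finitely many small primes cost a constant factor: for a large prime `p`, the factor
`A * 2 ^ k` is absorbed by `p ^ δ`. -/
theorem exists_le_mul_rpow_of_submultiplicative {f : ℕ → ℝ} (hf : ∀ n, 0 ≤ f n)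
    (hmul : ∀ a b : ℕ, a.Coprime b → f (a * b) ≤ f a * f b) {A : ℝ} {k : ℕ}
    (hpow : ∀ p e : ℕ, p.Prime → f (p ^ e) ≤ A * ((e : ℝ) + 1) ^ k) {δ : ℝ} (hδ : 0 < δ) :
    ∃ C, 0 < C ∧ ∀ n : ℕ, n ≠ 0 → f n ≤ C * (n : ℝ) ^ δ := by
  obtain ⟨K, hK1, P, hKP⟩ := exists_mul_add_one_pow_le_ite_mul_rpow A k hδ
  have hK0 : 0 < K ^ P := pow_pos (zero_lt_one.trans_le hK1) P
  have hprod (n : ℕ) : ∏ p ∈ n.primeFactors, (if p < P then K else 1) ≤ K ^ P := by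
    rw [Finset.prod_ite, Finset.prod_const, Finset.prod_const_one, mul_one]
    exact pow_le_pow_right₀ hK1 <| (Finset.card_le_card fun p hp =>
      Finset.mem_range.2 (Finset.mem_filter.1 hp).2).trans_eq (Finset.card_range P)
  refine ⟨max (K ^ P) (f 1), lt_max_of_lt_left hK0, fun n hn => ?_⟩
  rcases (Nat.one_le_iff_ne_zero.2 hn).eq_or_lt with rfl | hn1
  · simp
  · calc f n ≤ (∏ p ∈ n.primeFactors, if p < P then K else 1) * (n : ℝ) ^ δ :=
          le_prod_primeFactors_mul_rpow_of_submultiplicative hf hmul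
            (fun p e hp he => (hpow p e hp).trans (hKP p e hp.two_le he)) hn1
      _ ≤ max (K ^ P) (f 1) * (n : ℝ) ^ δ := by
          gcongr
          exact (hprod n).trans (le_max_left _ _)

/-! ### Gaussian integers of given norm -/

/-- The lattice points on the circle of radius `√n` about the origin of the plane, as Gaussian
integers. Its cardinality is the number of representations of `n` as a sum of two squares. -/
def latticeCircle (n : ℕ) : Set GaussianInt := {w | w.norm = n}

theorem natAbs_norm_eq_iff_mem_latticeCircle {w : GaussianInt} {n : ℕ} :
    w.norm.natAbs = n ↔ w ∈ latticeCircle n := by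
  rw [latticeCircle, mem_ofPred_eq, ← Int.natCast_inj, GaussianInt.abs_natCast_norm]

theorem latticeCircle_finite (n : ℕ) : (latticeCircle n).Finite := by
  have hinj : Function.Injective fun w : GaussianInt => (w.re, w.im) := fun _ _ h =>
    Zsqrtd.ext (congrArg Prod.fst h) (congrArg Prod.snd h)
  refine ((finite_Icc (-(n : ℤ)) n).prod (finite_Icc (-(n : ℤ)) n)).preimage hinj.injOn
    |>.subset fun w hw => ?_
  have hw : w.re * w.re - -1 * w.im * w.im = n := hw
  simp only [mem_preimage, mem_prod, mem_Icc]
  refine ⟨⟨?_, ?_⟩, ?_, ?_⟩ <;> nlinarith [Int.le_self_sq w.re, Int.le_self_sq (-w.re),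
    Int.le_self_sq w.im, Int.le_self_sq (-w.im), sq_nonneg w.re, sq_nonneg w.im]

theorem dvd_of_mem_latticeCircle {n : ℕ} {w : GaussianInt} (hw : w ∈ latticeCircle n) :
    w ∣ (n : GaussianInt) := by
  have hw : w.norm = n := hw
  refine ⟨star w, ?_⟩
  rw [← Zsqrtd.norm_eq_mul_conj, hw, Int.cast_natCast]

theorem natAbs_norm_dvd_sq_of_dvd_natCast {n : ℕ} {w : GaussianInt} (hw : w ∣ (n : GaussianInt)) :
    w.norm.natAbs ∣ n ^ 2 := by
  have h := Int.natAbs_dvd_natAbs.2 (map_dvd Zsqrtd.normMonoidHom hw)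
  simpa [Zsqrtd.normMonoidHom, Int.natAbs_mul, sq] using h

theorem eq_of_coprime_of_dvd_sq_of_mul_eq_mul {a b m n : ℕ} (hab : a.Coprime b) (hm : m ∣ a ^ 2)
    (hn : n ∣ b ^ 2) (h : m * n = a * b) : m = a := by
  have hmb : m.Coprime b := (hab.pow_left 2).coprime_dvd_left hm
  have han : a.Coprime n := (hab.pow_right 2).coprime_dvd_right hn
  exact Nat.dvd_antisymm (hmb.dvd_of_dvd_mul_right (h ▸ dvd_mul_right m n))
    (han.dvd_of_dvd_mul_right (h ▸ dvd_mul_right a b))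

/- Unique factorization splits `w ∣ a * b` into a divisor of `a` times a divisor of `b`, and
coprimality forces their norms. -/
theorem latticeCircle_mul_subset {a b : ℕ} (hab : a.Coprime b) :
    latticeCircle (a * b) ⊆ image2 (· * ·) (latticeCircle a) (latticeCircle b) := by
  intro w hw
  have hdvd : w ∣ (a : GaussianInt) * b := by simpa using dvd_of_mem_latticeCircle hw
  obtain ⟨u, v, hu, hv, rfl⟩ := exists_dvd_and_dvd_of_dvd_mul hdvd
  have hu2 := natAbs_norm_dvd_sq_of_dvd_natCast hu
  have hv2 := natAbs_norm_dvd_sq_of_dvd_natCast hv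
  have huv : u.norm.natAbs * v.norm.natAbs = a * b := by
    rw [← Int.natAbs_mul, ← Zsqrtd.norm_mul, natAbs_norm_eq_iff_mem_latticeCircle]
    exact hw
  refine ⟨u, natAbs_norm_eq_iff_mem_latticeCircle.1 ?_,
    v, natAbs_norm_eq_iff_mem_latticeCircle.1 ?_, rfl⟩
  · exact eq_of_coprime_of_dvd_sq_of_mul_eq_mul hab hu2 hv2 huv
  · exact eq_of_coprime_of_dvd_sq_of_mul_eq_mul hab.symm hv2 hu2
      (by rw [mul_comm, huv, mul_comm])

theorem ncard_image2_le_mul {α β γ : Type*} (f : α → β → γ) {s : Set α} {t : Set β}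
    (hs : s.Finite) (ht : t.Finite) : (image2 f s t).ncard ≤ s.ncard * t.ncard := by
  rw [← image_prod, ← ncard_prod]
  exact ncard_image_le (hs.prod ht)

theorem ncard_latticeCircle_mul_le {a b : ℕ} (hab : a.Coprime b) :
    (latticeCircle (a * b)).ncard ≤ (latticeCircle a).ncard * (latticeCircle b).ncard :=
  (ncard_le_ncard (latticeCircle_mul_subset hab)
    ((latticeCircle_finite a).image2 _ (latticeCircle_finite b))).trans
    (ncard_image2_le_mul _ (latticeCircle_finite a) (latticeCircle_finite b))

theorem prime_of_mem_latticeCircle {p : ℕ} (hp : p.Prime) {w : GaussianInt}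
    (hw : w ∈ latticeCircle p) : Prime w := by
  rw [← natAbs_norm_eq_iff_mem_latticeCircle] at hw
  refine Irreducible.prime ⟨fun hu => ?_, fun x y hxy => ?_⟩
  · exact hp.ne_one (hw ▸ Zsqrtd.norm_eq_one_iff.2 hu)
  · rw [hxy, Zsqrtd.norm_mul, Int.natAbs_mul] at hw
    rcases Nat.prime_mul_iff.1 (hw ▸ hp) with h | h
    · exact Or.inr (Zsqrtd.norm_eq_one_iff.1 h.2)
    · exact Or.inl (Zsqrtd.norm_eq_one_iff.1 h.2)

theorem exists_natCast_prime_eq_mul {p : ℕ} (hp : p.Prime) :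
    ∃ a b : GaussianInt, (p : GaussianInt) = a * b ∧ (Prime a ∨ IsUnit a) ∧
      (Prime b ∨ IsUnit b) := by
  have hnorm : (p : GaussianInt).norm.natAbs = p ^ 2 := by simp [Int.natAbs_mul, sq]
  have hpu : ¬IsUnit (p : GaussianInt) := by
    rw [← Zsqrtd.norm_eq_one_iff, hnorm, Nat.pow_eq_one]
    simp [hp.ne_one]
  by_cases hirr : Irreducible (p : GaussianInt)
  · exact ⟨p, 1, (mul_one _).symm, Or.inl hirr.prime, Or.inr isUnit_one⟩
  · obtain ⟨a, b, hab, ha, hb⟩ : ∃ a b, (p : GaussianInt) = a * b ∧ ¬IsUnit a ∧ ¬IsUnit b := by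
      simpa [irreducible_iff, hpu, not_forall, not_or] using hirr
    rw [hab, Zsqrtd.norm_mul, Int.natAbs_mul, hp.mul_eq_prime_sq_iff
      (mt Zsqrtd.norm_eq_one_iff.1 ha) (mt Zsqrtd.norm_eq_one_iff.1 hb)] at hnorm
    simp only [natAbs_norm_eq_iff_mem_latticeCircle] at hnorm
    exact ⟨a, b, hab, Or.inl (prime_of_mem_latticeCircle hp hnorm.1),
      Or.inl (prime_of_mem_latticeCircle hp hnorm.2)⟩

theorem exists_associated_pow_of_dvd_pow {M : Type*} [CommMonoidWithZero M] [IsCancelMulZero M]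
    {q w : M} (hq : Prime q ∨ IsUnit q) {e : ℕ} (h : w ∣ q ^ e) :
    ∃ i ≤ e, Associated w (q ^ i) := by
  rcases hq with hq | hq
  · exact (dvd_prime_pow hq e).1 h
  · exact ⟨0, e.zero_le, by simpa using isUnit_of_dvd_unit h (hq.pow e)⟩

theorem latticeCircle_pow_subset {p : ℕ} {a b : GaussianInt} (hp : (p : GaussianInt) = a * b)
    (ha : Prime a ∨ IsUnit a) (hb : Prime b ∨ IsUnit b) (e : ℕ) :
    latticeCircle (p ^ e) ⊆ image2 (fun u (ij : ℕ × ℕ) => u * (a ^ ij.1 * b ^ ij.2))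
      (latticeCircle 1) (Iic e ×ˢ Iic e) := by
  intro w hw
  have hdvd : w ∣ a ^ e * b ^ e := by
    simpa [hp, mul_pow] using dvd_of_mem_latticeCircle hw
  obtain ⟨u, v, hu, hv, rfl⟩ := exists_dvd_and_dvd_of_dvd_mul hdvd
  obtain ⟨i, hi, hui⟩ := exists_associated_pow_of_dvd_pow ha hu
  obtain ⟨j, hj, hvj⟩ := exists_associated_pow_of_dvd_pow hb hv
  obtain ⟨z, hz⟩ := (hui.mul_mul hvj).symm
  refine ⟨z, ?_, (i, j), ⟨hi, hj⟩, (mul_comm _ _).trans hz⟩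
  exact natAbs_norm_eq_iff_mem_latticeCircle.1 (Zsqrtd.norm_eq_one_iff.2 z.isUnit)

theorem ncard_latticeCircle_prime_pow_le {p : ℕ} (hp : p.Prime) (e : ℕ) :
    (latticeCircle (p ^ e)).ncard ≤ (latticeCircle 1).ncard * (e + 1) ^ 2 := by
  obtain ⟨a, b, hab, ha, hb⟩ := exists_natCast_prime_eq_mul hp
  have hbox : (Iic e ×ˢ Iic e).Finite := (finite_Iic e).prod (finite_Iic e)
  have hcard : (Iic e).ncard = e + 1 := by
    rw [ncard_eq_toFinset_card', toFinset_Iic, Nat.card_Iic]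
  calc (latticeCircle (p ^ e)).ncard
      ≤ (latticeCircle 1).ncard * (Iic e ×ˢ Iic e).ncard :=
        (ncard_le_ncard (latticeCircle_pow_subset hab ha hb e)
          ((latticeCircle_finite 1).image2 _ hbox)).trans
          (ncard_image2_le_mul _ (latticeCircle_finite 1) hbox)
    _ = (latticeCircle 1).ncard * (e + 1) ^ 2 := by
        rw [ncard_prod, hcard, sq]

theorem exists_ncard_latticeCircle_le {δ : ℝ} (hδ : 0 < δ) :
    ∃ C, 0 < C ∧ ∀ (n : ℕ) (X : ℝ), 1 ≤ X → n ≤ X →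
      ((latticeCircle n).ncard : ℝ) ≤ C * X ^ δ := by
  obtain ⟨C, hC, hle⟩ := exists_le_mul_rpow_of_submultiplicative
    (f := fun n => ((latticeCircle n).ncard : ℝ)) (A := (latticeCircle 1).ncard) (k := 2)
    (fun n => Nat.cast_nonneg _) (fun a b hab => mod_cast ncard_latticeCircle_mul_le hab)
    (fun p e hp => mod_cast ncard_latticeCircle_prime_pow_le hp e) hδ
  refine ⟨max C (latticeCircle 0).ncard, lt_max_of_lt_left hC, fun n X hX hnX => ?_⟩
  rcases eq_or_ne n 0 with rfl | hn
  · calc ((latticeCircle 0).ncard : ℝ) ≤ max C (latticeCircle 0).ncard * 1 := by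
          rw [mul_one]
          exact le_max_right _ _
      _ ≤ max C (latticeCircle 0).ncard * X ^ δ := by
          gcongr
          exact one_le_rpow hX hδ.le
  · calc ((latticeCircle n).ncard : ℝ) ≤ C * n ^ δ := hle n hn
      _ ≤ max C (latticeCircle 0).ncard * X ^ δ := by
          gcongr
          exact le_max_left _ _

/-! ### The paraboloid -/

/-- The space-time frequency `(-|k|², k)` of the plane wave `e^{i(k·x - s|k|²)}`; the set of all of
them is the discrete paraboloid. -/
def paraboloid (k : ℤ × ℤ) : ℤ × ℤ × ℤ := (-(k.1 ^ 2 + k.2 ^ 2), k)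

/- Parallelogram law: fixing `k + l` and `|k|² + |l|²` fixes `|k - l|²`. -/
theorem norm_sub_eq_of_paraboloid_add_eq {k l k' l' : ℤ × ℤ}
    (h : paraboloid k + paraboloid l = paraboloid k' + paraboloid l') :
    (⟨k.1 - l.1, k.2 - l.2⟩ : GaussianInt).norm =
      (⟨k'.1 - l'.1, k'.2 - l'.2⟩ : GaussianInt).norm := by
  simp only [paraboloid, Prod.ext_iff, Prod.fst_add, Prod.snd_add] at h
  obtain ⟨h0, h1, h2⟩ := h
  simp only [Zsqrtd.norm_def]
  linear_combination -2 * h0 - (k.1 + l.1 + k'.1 + l'.1) * h1 - (k.2 + l.2 + k'.2 + l'.2) * h2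

theorem card_filter_paraboloid_add_eq_le_ncard (K : Finset (ℤ × ℤ)) (q : (ℤ × ℤ) × ℤ × ℤ) :
    ((K ×ˢ K).filter fun m =>
      paraboloid m.1 + paraboloid m.2 = paraboloid q.1 + paraboloid q.2).card ≤
      (latticeCircle (⟨q.1.1 - q.2.1, q.1.2 - q.2.2⟩ : GaussianInt).norm.natAbs).ncard := by
  rw [← ncard_coe_finset]
  refine ncard_le_ncard_of_injOn (fun m => ⟨m.1.1 - m.2.1, m.1.2 - m.2.2⟩) (fun m hm => ?_)
    (fun m hm m' hm' heq => ?_) (latticeCircle_finite _)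
  · rw [← natAbs_norm_eq_iff_mem_latticeCircle,
      norm_sub_eq_of_paraboloid_add_eq (Finset.mem_filter.1 hm).2]
  · have hsum := (Finset.mem_filter.1 hm).2.trans (Finset.mem_filter.1 hm').2.symm
    simp only [paraboloid, Prod.ext_iff, Prod.fst_add, Prod.snd_add] at hsum
    have hre := congrArg Zsqrtd.re heq
    have him := congrArg Zsqrtd.im heq
    simp only at hre him
    ext <;> omega

theorem exists_card_filter_paraboloid_add_eq_le {δ : ℝ} (hδ : 0 < δ) :
    ∃ C, 0 < C ∧ ∀ N : ℝ, 1 ≤ N → ∀ K : Finset (ℤ × ℤ),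
      (∀ k ∈ K, (k.1 : ℝ) ^ 2 + (k.2 : ℝ) ^ 2 ≤ N ^ 2) → ∀ n,
        (((K ×ˢ K).filter fun m => paraboloid m.1 + paraboloid m.2 = n).card : ℝ) ≤
          C * (4 * N ^ 2) ^ δ := by
  obtain ⟨C, hC, hcircle⟩ := exists_ncard_latticeCircle_le hδ
  refine ⟨C, hC, fun N hN K hK n => ?_⟩
  rcases ((K ×ˢ K).filter fun m => paraboloid m.1 + paraboloid m.2 = n).eq_empty_or_nonempty
    with hempty | ⟨q, hq⟩
  · rw [hempty, Finset.card_empty, Nat.cast_zero]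
    positivity
  obtain ⟨hqK, rfl⟩ := Finset.mem_filter.1 hq
  obtain ⟨hq1, hq2⟩ := Finset.mem_product.1 hqK
  refine (Nat.cast_le.2 (card_filter_paraboloid_add_eq_le_ncard K q)).trans
    (hcircle _ _ (by nlinarith) ?_)
  rw [GaussianInt.natCast_natAbs_norm, Zsqrtd.norm_def]
  push_cast
  linarith [hK _ hq1, hK _ hq2, two_mul_le_add_sq (q.1.1 : ℝ) (-q.2.1),
    two_mul_le_add_sq (q.1.2 : ℝ) (-q.2.2)]

/-! ### Bessel's inequality -/

theorem tsum_lintegral_le_lintegral_tsum {α ι : Type*} [MeasurableSpace α] (μ : Measure α)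
    (f : ι → α → ℝ≥0∞) : ∑' i, ∫⁻ x, f i x ∂μ ≤ ∫⁻ x, ∑' i, f i x ∂μ := by
  classical
  refine ENNReal.summable.tsum_le_of_sum_le fun s => ?_
  have hsum : ∑ i ∈ s, ∫⁻ x, f i x ∂μ ≤ ∫⁻ x, ∑ i ∈ s, f i x ∂μ := by
    induction s using Finset.induction_on with
    | empty => simp
    | insert i s hi ih =>
      simp only [Finset.sum_insert hi]
      exact (add_le_add_right ih _).trans (le_lintegral_add _ _)
  exact hsum.trans (lintegral_mono fun x => ENNReal.sum_le_tsum s)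

theorem fourierCoeffOn_of_not_aestronglyMeasurable {a b : ℝ} (hab : a < b) {f : ℝ → ℂ}
    (hf : ¬AEStronglyMeasurable f (volume.restrict (Ioc a b))) (n : ℤ) :
    fourierCoeffOn hab f n = 0 := by
  rw [fourierCoeffOn_eq_integral, intervalIntegral.integral_of_le hab.le, integral_undef, smul_zero]
  intro hint
  have hchar : Continuous fun x : ℝ => fourier n (x : AddCircle (b - a)) :=
    (fourier n).continuous.comp (AddCircle.continuous_mk' _)
  refine hf ((hchar.aestronglyMeasurable.smul hint.aestronglyMeasurable).congr
    (Eventually.of_forall fun x => ?_))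
  simp only [Pi.smul_apply', smul_smul, ← fourier_add, add_neg_cancel, fourier_zero, one_smul]

/- A non-measurable `f` satisfies this as well: its coefficients are Bochner integrals of
non-integrable functions, hence zero. -/
theorem tsum_enorm_sq_fourierCoeffOn_le {a b : ℝ} (hab : a < b) (f : ℝ → ℂ) :
    ENNReal.ofReal (b - a) * ∑' n, ‖fourierCoeffOn hab f n‖ₑ ^ 2 ≤
      ∫⁻ x in Ioc a b, ‖f x‖ₑ ^ 2 := by
  by_cases hf : AEStronglyMeasurable f (volume.restrict (Ioc a b))
  swap
  · simp [fourierCoeffOn_of_not_aestronglyMeasurable hab hf]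
  rcases eq_top_or_lt_top (∫⁻ x in Ioc a b, ‖f x‖ₑ ^ 2) with htop | hfin
  · exact htop ▸ le_top
  have hL2 : MemLp f 2 (volume.restrict (Ioc a b)) := by
    refine ⟨hf, ?_⟩
    rw [eLpNorm_lt_top_iff_lintegral_rpow_enorm_lt_top two_ne_zero ENNReal.ofNat_ne_top]
    simpa using hfin
  have hparseval := hasSum_sq_fourierCoeffOn hab hL2
  have hint : Integrable (fun x => ‖f x‖ ^ 2) (volume.restrict (Ioc a b)) :=
    (memLp_two_iff_integrable_sq_norm hf).1 hL2
  simp only [← ofReal_norm, ← ENNReal.ofReal_pow (norm_nonneg _)]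
  rw [← ENNReal.ofReal_tsum_of_nonneg (fun n => sq_nonneg _) hparseval.summable,
    hparseval.tsum_eq, ← ENNReal.ofReal_mul (sub_pos.2 hab).le, smul_eq_mul,
    mul_inv_cancel_left₀ (sub_pos.2 hab).ne', intervalIntegral.integral_of_le hab.le,
    ofReal_integral_eq_lintegral_ofReal hint (Eventually.of_forall fun x => sq_nonneg _)]

theorem tsum_enorm_sq_fourierCoeffOn_fourierCoeffOn_le {a b c d : ℝ} (hab : a < b) (hcd : c < d)
    (f : ℝ → ℝ → ℂ) :
    ENNReal.ofReal (b - a) * (ENNReal.ofReal (d - c) *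
        ∑' k : ℤ × ℤ, ‖fourierCoeffOn hab (fun x => fourierCoeffOn hcd (f x) k.2) k.1‖ₑ ^ 2) ≤
      ∫⁻ x in Ioc a b, ∫⁻ y in Ioc c d, ‖f x y‖ₑ ^ 2 := by
  rw [ENNReal.tsum_prod', ENNReal.tsum_comm, mul_left_comm, ← ENNReal.tsum_mul_left]
  calc ENNReal.ofReal (d - c) * ∑' n, ENNReal.ofReal (b - a) *
        ∑' m, ‖fourierCoeffOn hab (fun x => fourierCoeffOn hcd (f x) n) m‖ₑ ^ 2
      ≤ ENNReal.ofReal (d - c) * ∑' n, ∫⁻ x in Ioc a b, ‖fourierCoeffOn hcd (f x) n‖ₑ ^ 2 := by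
        gcongr with n
        exact tsum_enorm_sq_fourierCoeffOn_le hab _
    _ ≤ ENNReal.ofReal (d - c) * ∫⁻ x in Ioc a b, ∑' n, ‖fourierCoeffOn hcd (f x) n‖ₑ ^ 2 := by
        gcongr
        exact tsum_lintegral_le_lintegral_tsum _ _
    _ = ∫⁻ x in Ioc a b, ENNReal.ofReal (d - c) * ∑' n, ‖fourierCoeffOn hcd (f x) n‖ₑ ^ 2 :=
        (lintegral_const_mul' _ _ ENNReal.ofReal_ne_top).symm
    _ ≤ ∫⁻ x in Ioc a b, ∫⁻ y in Ioc c d, ‖f x y‖ₑ ^ 2 :=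
        lintegral_mono fun x => tsum_enorm_sq_fourierCoeffOn_le hcd (f x)

theorem integral_exp_mul_eq_fourierCoeffOn (f : ℝ → ℂ) (n : ℤ) :
    ∫ x in (0 : ℝ)..(2 * π), Complex.exp (-Complex.I * ((n * x : ℝ) : ℂ)) * f x =
      (2 * π) * fourierCoeffOn two_pi_pos f n := by
  have hpi : (π : ℂ) ≠ 0 := mod_cast pi_ne_zero
  have hchar (x : ℝ) : fourier (-n) (x : AddCircle (2 * π - 0)) =
      Complex.exp (-Complex.I * ((n * x : ℝ) : ℂ)) := by
    rw [fourier_coe_apply]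
    congr 1
    push_cast
    field_simp
    ring
  simp only [fourierCoeffOn_eq_integral, hchar, smul_eq_mul, Complex.real_smul]
  push_cast
  rw [sub_zero, ← mul_assoc, mul_one_div_cancel (by simp), one_mul]

theorem fCoeff2_eq_fourierCoeffOn (φ : ℝ → ℝ → ℂ) (k : ℤ × ℤ) :
    fCoeff2 φ k = (2 * π) ^ 2 *
      fourierCoeffOn two_pi_pos (fun x1 => fourierCoeffOn two_pi_pos (φ x1) k.2) k.1 := by
  have hexp (x1 x2 : ℝ) : Complex.exp (-Complex.I * ((k.1 * x1 + k.2 * x2 : ℝ) : ℂ)) =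
      Complex.exp (-Complex.I * ((k.1 * x1 : ℝ) : ℂ)) *
        Complex.exp (-Complex.I * ((k.2 * x2 : ℝ) : ℂ)) := by
    rw [← Complex.exp_add, Complex.ofReal_add, mul_add]
  calc fCoeff2 φ k = ∫ x1 in (0 : ℝ)..(2 * π), Complex.exp (-Complex.I * ((k.1 * x1 : ℝ) : ℂ)) *
        (2 * π * fourierCoeffOn two_pi_pos (φ x1) k.2) := by
        simp only [fCoeff2, hexp, mul_assoc (Complex.exp _), intervalIntegral.integral_const_mul,
          integral_exp_mul_eq_fourierCoeffOn]
    _ = 2 * π * (2 * π *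
          fourierCoeffOn two_pi_pos (fun x1 => fourierCoeffOn two_pi_pos (φ x1) k.2) k.1) := by
        rw [integral_exp_mul_eq_fourierCoeffOn, fourierCoeffOn.const_mul]
    _ = _ := by ring

theorem tsum_enorm_sq_fCoeff2_le (φ : ℝ → ℝ → ℂ) :
    ∑' k, ‖fCoeff2 φ k‖ₑ ^ 2 ≤ ENNReal.ofReal (2 * π) ^ 2 *
      ∫⁻ x1 in Ioc 0 (2 * π), ∫⁻ x2 in Ioc 0 (2 * π), ‖φ x1 x2‖ₑ ^ 2 := by
  have hscale (z : ℂ) : ‖(2 * π : ℂ) ^ 2 * z‖ₑ ^ 2 = ENNReal.ofReal (2 * π) ^ 4 * ‖z‖ₑ ^ 2 := by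
    rw [enorm_mul, enorm_pow, ← Complex.ofReal_ofNat, ← Complex.ofReal_mul, ← ofReal_norm,
      Complex.norm_of_nonneg two_pi_pos.le]
    ring
  have hbessel := tsum_enorm_sq_fourierCoeffOn_fourierCoeffOn_le two_pi_pos two_pi_pos φ
  simp only [fCoeff2_eq_fourierCoeffOn, hscale, ENNReal.tsum_mul_left]
  rw [sub_zero, ← mul_assoc, ← sq] at hbessel
  rw [show 4 = 2 + 2 from rfl, pow_add, mul_assoc]
  gcongr

/-! ### Fourth moments and additive energy -/

section AdditiveEnergy

variable {𝕜 Λ Λ' ι : Type*} [RCLike 𝕜]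

theorem norm_sum_sq_le_card_mul_sum {E : Type*} [SeminormedAddCommGroup E] (s : Finset ι)
    (b : ι → E) : ‖∑ m ∈ s, b m‖ ^ 2 ≤ s.card * ∑ m ∈ s, ‖b m‖ ^ 2 :=
  (pow_le_pow_left₀ (norm_nonneg _) (norm_sum_le s b) 2).trans sq_sum_le_card_mul_sum_sq

theorem norm_sq_sum_smul_of_orthonormal {E : Type*} [NormedAddCommGroup E] [InnerProductSpace 𝕜 E]
    {v : Λ → E} (hv : Orthonormal 𝕜 v) (s : Finset Λ) (b : Λ → 𝕜) :
    ‖∑ n ∈ s, b n • v n‖ ^ 2 = ∑ n ∈ s, ‖b n‖ ^ 2 := by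
  have h := hv.inner_sum b b s
  simp only [inner_self_eq_norm_sq_to_K, RCLike.conj_mul] at h
  exact_mod_cast h

/- Cauchy–Schwarz on the fibres of `h`, whose contributions are orthogonal to each other. -/
theorem norm_sq_sum_smul_comp_le_of_orthonormal {E : Type*} [NormedAddCommGroup E]
    [InnerProductSpace 𝕜 E] {v : Λ → E} (hv : Orthonormal 𝕜 v) [DecidableEq Λ] (s : Finset ι)
    (h : ι → Λ) (b : ι → 𝕜) {D : ℝ} (hD : ∀ n, ((s.filter fun m => h m = n).card : ℝ) ≤ D) :
    ‖∑ m ∈ s, b m • v (h m)‖ ^ 2 ≤ D * ∑ m ∈ s, ‖b m‖ ^ 2 := by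
  have hmaps : ∀ m ∈ s, h m ∈ s.image h := fun m => Finset.mem_image_of_mem h
  calc ‖∑ m ∈ s, b m • v (h m)‖ ^ 2
      = ‖∑ n ∈ s.image h, (∑ m ∈ s with h m = n, b m) • v n‖ ^ 2 := by
        rw [← Finset.sum_fiberwise_of_maps_to hmaps]
        congr 2
        refine Finset.sum_congr rfl fun n _ => ?_
        rw [Finset.sum_smul]
        exact Finset.sum_congr rfl fun m hm => by rw [(Finset.mem_filter.1 hm).2]
    _ = ∑ n ∈ s.image h, ‖∑ m ∈ s with h m = n, b m‖ ^ 2 :=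
        norm_sq_sum_smul_of_orthonormal hv _ _
    _ ≤ ∑ n ∈ s.image h, D * ∑ m ∈ s with h m = n, ‖b m‖ ^ 2 := by
        gcongr with n
        exact (norm_sum_sq_le_card_mul_sum _ _).trans (by gcongr; exact hD n)
    _ = D * ∑ m ∈ s, ‖b m‖ ^ 2 := by
        rw [← Finset.mul_sum, Finset.sum_fiberwise_of_maps_to hmaps]

variable {X Y : Type*} [TopologicalSpace X] [TopologicalSpace Y]

/-- The tensor product `(x, y) ↦ f x * g y` of two functions. -/
def tensor {R : Type*} [TopologicalSpace R] [Mul R] [ContinuousMul R] (f : C(X, R)) (g : C(Y, R)) :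
    C(X × Y, R) :=
  f.comp ContinuousMap.fst * g.comp ContinuousMap.snd

variable [CompactSpace X] [MeasurableSpace X] [BorelSpace X] {μ : Measure X} [IsFiniteMeasure μ]
  [CompactSpace Y] [MeasurableSpace Y] [BorelSpace Y] {ν : Measure Y} [IsFiniteMeasure ν]

theorem enorm_sq_toLp_two (f : C(X, 𝕜)) :
    ‖ContinuousMap.toLp 2 μ 𝕜 f‖ₑ ^ 2 = ∫⁻ x, ‖f x‖ₑ ^ 2 ∂μ := by
  rw [Lp.enorm_def, eLpNorm_congr_ae (ContinuousMap.coeFn_toLp μ f)]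
  simpa using eLpNorm_nnreal_pow_eq_lintegral (f := f) (μ := μ) (p := 2) two_ne_zero

theorem lintegral_enorm_pow_four_le_of_orthonormal [Add Λ] [DecidableEq Λ] {e : Λ → C(X, 𝕜)}
    (he : Orthonormal 𝕜 fun n => ContinuousMap.toLp 2 μ 𝕜 (e n))
    (hadd : ∀ m n, e (m + n) = e m * e n) (K : Finset ι) (h : ι → Λ) (c : ι → 𝕜) {D : ℝ}
    (hD : ∀ n, (((K ×ˢ K).filter fun m => h m.1 + h m.2 = n).card : ℝ) ≤ D) :
    ∫⁻ x, ‖∑ k ∈ K, c k * e (h k) x‖ₑ ^ 4 ∂μ ≤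
      ENNReal.ofReal D * (∑ k ∈ K, ‖c k‖ₑ ^ 2) ^ 2 := by
  let F : C(X, 𝕜) := ∑ m ∈ K ×ˢ K, (c m.1 * c m.2) • e (h m.1 + h m.2)
  have hF (x : X) : (∑ k ∈ K, c k * e (h k) x) ^ 2 = F x := by
    simp only [F, sq, Finset.sum_mul_sum, ← Finset.sum_product', ContinuousMap.sum_apply,
      ContinuousMap.smul_apply, hadd, ContinuousMap.mul_apply, smul_eq_mul, mul_mul_mul_comm]
  have hc : ∑ m ∈ K ×ˢ K, ‖c m.1 * c m.2‖ ^ 2 = (∑ k ∈ K, ‖c k‖ ^ 2) ^ 2 := by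
    simp only [sq (Finset.sum K _), Finset.sum_mul_sum, ← Finset.sum_product', norm_mul, mul_pow]
  have hle : ‖ContinuousMap.toLp 2 μ 𝕜 F‖ ^ 2 ≤ D * (∑ k ∈ K, ‖c k‖ ^ 2) ^ 2 := by
    simp only [F, map_sum, map_smul]
    exact hc ▸ norm_sq_sum_smul_comp_le_of_orthonormal he _ _ _ hD
  have hc' : ENNReal.ofReal (∑ k ∈ K, ‖c k‖ ^ 2) = ∑ k ∈ K, ‖c k‖ₑ ^ 2 := by
    rw [ENNReal.ofReal_sum_of_nonneg fun k _ => sq_nonneg _]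
    simp only [ENNReal.ofReal_pow (norm_nonneg _), ofReal_norm]
  calc ∫⁻ x, ‖∑ k ∈ K, c k * e (h k) x‖ₑ ^ 4 ∂μ = ∫⁻ x, ‖F x‖ₑ ^ 2 ∂μ := by
        simp only [← hF, enorm_pow, ← pow_mul, Nat.reduceMul]
    _ = ENNReal.ofReal (‖ContinuousMap.toLp 2 μ 𝕜 F‖ ^ 2) := by
        rw [← enorm_sq_toLp_two, ENNReal.ofReal_pow (norm_nonneg _), ofReal_norm]
    _ ≤ ENNReal.ofReal (D * (∑ k ∈ K, ‖c k‖ ^ 2) ^ 2) := ENNReal.ofReal_le_ofReal hle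
    _ = ENNReal.ofReal D * (∑ k ∈ K, ‖c k‖ₑ ^ 2) ^ 2 := by
        rw [ENNReal.ofReal_mul' (sq_nonneg _), ← hc', ENNReal.ofReal_pow (by positivity)]

theorem orthonormal_toLp_tensor [BorelSpace (X × Y)] {e : Λ → C(X, 𝕜)} {f : Λ' → C(Y, 𝕜)}
    (he : Orthonormal 𝕜 fun n => ContinuousMap.toLp 2 μ 𝕜 (e n))
    (hf : Orthonormal 𝕜 fun n => ContinuousMap.toLp 2 ν 𝕜 (f n)) :
    Orthonormal 𝕜 fun n : Λ × Λ' =>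
      ContinuousMap.toLp 2 (μ.prod ν) 𝕜 (tensor (e n.1) (f n.2)) := by
  classical
  rw [orthonormal_iff_ite] at he hf ⊢
  rintro ⟨m, m'⟩ ⟨n, n'⟩
  simp only [ContinuousMap.inner_toLp] at he hf ⊢
  calc ∫ z : X × Y, tensor (e n) (f n') z * starRingEnd 𝕜 (tensor (e m) (f m') z) ∂μ.prod ν
      = ∫ z : X × Y, (e n z.1 * starRingEnd 𝕜 (e m z.1)) *
          (f n' z.2 * starRingEnd 𝕜 (f m' z.2)) ∂μ.prod ν := by
        refine integral_congr_ae (Eventually.of_forall fun z => ?_)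
        simp only [tensor, ContinuousMap.mul_apply, ContinuousMap.comp_apply,
          ContinuousMap.fst_apply, ContinuousMap.snd_apply, map_mul, mul_mul_mul_comm]
    _ = _ := by
        rw [integral_prod_mul (fun x => e n x * starRingEnd 𝕜 (e m x))
          (fun y => f n' y * starRingEnd 𝕜 (f m' y)), he, hf]
        simp [← ite_and, and_comm]

end AdditiveEnergy

/-! ### The periodic Strichartz estimate -/

section Torus

variable {T : ℝ}

/-- The character of the three-dimensional torus of side `T` with frequency `n`. -/
def torusChar (n : ℤ × ℤ × ℤ) : C(AddCircle T × AddCircle T × AddCircle T, ℂ) :=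
  tensor (fourier n.1) (tensor (fourier n.2.1) (fourier n.2.2))

theorem torusChar_apply (n : ℤ × ℤ × ℤ) (z : AddCircle T × AddCircle T × AddCircle T) :
    torusChar n z = fourier n.1 z.1 * (fourier n.2.1 z.2.1 * fourier n.2.2 z.2.2) := rfl

theorem torusChar_add (m n : ℤ × ℤ × ℤ) :
    (torusChar (m + n) : C(AddCircle T × AddCircle T × AddCircle T, ℂ)) =
      torusChar m * torusChar n := by
  ext z
  simp only [ContinuousMap.mul_apply, torusChar_apply, Prod.fst_add, Prod.snd_add, fourier_add]
  ring

/-- The free Schrödinger evolution with Fourier coefficients `c` supported on `K`, as a function of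
`(s, x)` on the torus of side `T`. For `T = 2π` it is `∑ c k * e^{i(k·x - s|k|²)}`. -/
def freeEvolution (K : Finset (ℤ × ℤ)) (c : ℤ × ℤ → ℂ)
    (z : AddCircle T × AddCircle T × AddCircle T) : ℂ :=
  ∑ k ∈ K, c k * torusChar (paraboloid k) z

theorem continuous_freeEvolution (K : Finset (ℤ × ℤ)) (c : ℤ × ℤ → ℂ) :
    Continuous (freeEvolution (T := T) K c) :=
  continuous_finsetSum K fun _ _ => continuous_const.mul (torusChar _).continuous

variable [hT : Fact (0 < T)]

theorem orthonormal_toLp_torusChar :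
    Orthonormal ℂ fun n : ℤ × ℤ × ℤ =>
      ContinuousMap.toLp 2
        ((AddCircle.haarAddCircle (T := T)).prod
          (AddCircle.haarAddCircle.prod AddCircle.haarAddCircle)) ℂ (torusChar n) :=
  orthonormal_toLp_tensor (e := fourier)
    (f := fun m : ℤ × ℤ => tensor (fourier m.1) (fourier m.2)) orthonormal_fourier
    (orthonormal_toLp_tensor (e := fourier) (f := fourier) orthonormal_fourier orthonormal_fourier)

theorem lintegral_addCircle_prod_eq {f : AddCircle T × AddCircle T × AddCircle T → ℝ≥0∞}
    (hf : Measurable f) :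
    ∫⁻ s : AddCircle T, ∫⁻ x1 : AddCircle T, ∫⁻ x2 : AddCircle T, f (s, x1, x2) =
      ENNReal.ofReal T ^ 3 * ∫⁻ z, f z ∂((AddCircle.haarAddCircle (T := T)).prod
        (AddCircle.haarAddCircle.prod AddCircle.haarAddCircle)) := by
  simp only [AddCircle.volume_eq_smul_haarAddCircle, lintegral_smul_measure, smul_eq_mul,
    lintegral_const_mul' _ _ ENNReal.ofReal_ne_top]
  have hslice (s : AddCircle T) := lintegral_prod (μ := AddCircle.haarAddCircle (T := T))
    (ν := AddCircle.haarAddCircle) _ (hf.comp (measurable_prodMk_left (x := s))).aemeasurable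
  simp only [Function.comp_apply] at hslice
  rw [lintegral_prod _ hf.aemeasurable]
  simp only [hslice]
  ring

variable (T) in
theorem exists_lintegral_freeEvolution_pow_four_le {ε : ℝ} (hε : 0 < ε) :
    ∃ C, 0 < C ∧ ∀ N : ℝ, 1 ≤ N → ∀ K : Finset (ℤ × ℤ),
      (∀ k ∈ K, (k.1 : ℝ) ^ 2 + (k.2 : ℝ) ^ 2 ≤ N ^ 2) → ∀ c : ℤ × ℤ → ℂ,
        ∫⁻ s : AddCircle T, ∫⁻ x1 : AddCircle T, ∫⁻ x2 : AddCircle T,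
            ‖freeEvolution K c (s, x1, x2)‖ₑ ^ 4 ≤
          ENNReal.ofReal (C * N ^ ε) * (∑ k ∈ K, ‖c k‖ₑ ^ 2) ^ 2 := by
  obtain ⟨C, hC, hcard⟩ := exists_card_filter_paraboloid_add_eq_le (half_pos hε)
  have hT0 : 0 < T := hT.out
  refine ⟨T ^ 3 * (C * 4 ^ (ε / 2)), by positivity, fun N hN K hK c => ?_⟩
  have hN0 : 0 ≤ N := zero_le_one.trans hN
  have hpow : C * (4 * N ^ 2) ^ (ε / 2) = C * 4 ^ (ε / 2) * N ^ ε := by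
    rw [mul_rpow (by norm_num) (sq_nonneg N), ← rpow_natCast_mul hN0, Nat.cast_ofNat,
      mul_div_cancel₀ _ two_ne_zero, mul_assoc]
  calc ∫⁻ s : AddCircle T, ∫⁻ x1 : AddCircle T, ∫⁻ x2 : AddCircle T,
        ‖freeEvolution K c (s, x1, x2)‖ₑ ^ 4
      = ENNReal.ofReal T ^ 3 * ∫⁻ z, ‖freeEvolution K c z‖ₑ ^ 4
          ∂((AddCircle.haarAddCircle (T := T)).prod
            (AddCircle.haarAddCircle.prod AddCircle.haarAddCircle)) :=
        lintegral_addCircle_prod_eq ((continuous_freeEvolution K c).enorm.measurable.pow_const 4)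
    _ ≤ ENNReal.ofReal T ^ 3 *
          (ENNReal.ofReal (C * 4 ^ (ε / 2) * N ^ ε) * (∑ k ∈ K, ‖c k‖ₑ ^ 2) ^ 2) := by
        gcongr
        rw [← hpow]
        exact lintegral_enorm_pow_four_le_of_orthonormal orthonormal_toLp_torusChar torusChar_add
          K paraboloid c (hcard N hN K hK)
    _ = _ := by
        rw [← mul_assoc, ← ENNReal.ofReal_pow hT0.le, ← ENNReal.ofReal_mul (by positivity),
          ← mul_assoc]

/-! ### The time change -/

theorem lintegral_Ioc_add_nat_mul (f : AddCircle T → ℝ≥0∞) (a : ℝ) (n : ℕ) :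
    ∫⁻ s in Ioc a (a + n * T), f s = n * ∫⁻ b, f b := by
  have hT0 : 0 < T := hT.out
  induction n with
  | zero => simp
  | succ n ih =>
    have hunion : Ioc a (a + (n + 1 : ℕ) * T) =
        Ioc a (a + n * T) ∪ Ioc (a + n * T) (a + n * T + T) := by
      rw [Ioc_union_Ioc_eq_Ioc (le_add_of_nonneg_right (by positivity)) (by linarith),
        Nat.cast_succ]
      ring_nf
    rw [hunion, lintegral_union measurableSet_Ioc (Ioc_disjoint_Ioc_of_le le_rfl), ih,
      AddCircle.lintegral_preimage T, Nat.cast_succ, add_one_mul]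

variable (T) in
theorem exists_setLIntegral_addCircle_le {S : Set ℝ} (hS : Bornology.IsBounded S) :
    ∃ n : ℕ, 0 < n ∧ ∀ f : AddCircle T → ℝ≥0∞, ∫⁻ s in S, f s ≤ n * ∫⁻ b, f b := by
  obtain ⟨R, hR⟩ := hS.subset_ball 0
  obtain ⟨n, hn⟩ := exists_nat_gt (max 0 (2 * R / T))
  refine ⟨n, Nat.cast_pos.1 ((le_max_left _ _).trans_lt hn), fun f => ?_⟩
  have hnT : 2 * R < n * T := (div_lt_iff₀ hT.out).1 ((le_max_right _ _).trans_lt hn)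
  rw [← lintegral_Ioc_add_nat_mul f (-R) n]
  refine lintegral_mono_set fun s hs => ?_
  have hsR := abs_lt.1 (mem_ball_zero_iff.1 (hR hs))
  exact ⟨hsR.1, by linarith [hsR.2]⟩

variable (T) in
theorem exists_lintegral_deriv_mul_comp_le {g : ℝ → ℝ} (hg : Monotone g) {I : Set ℝ}
    (hI : MeasurableSet I) (hd : ∀ t ∈ I, DifferentiableAt ℝ g t)
    (hb : Bornology.IsBounded (g '' I)) :
    ∃ n : ℕ, 0 < n ∧ ∀ f : AddCircle T → ℝ≥0∞,
      ∫⁻ t in I, ENNReal.ofReal (deriv g t) * f (g t) ≤ n * ∫⁻ b, f b := by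
  obtain ⟨n, hn, hle⟩ := exists_setLIntegral_addCircle_le T hb
  refine ⟨n, hn, fun f => ?_⟩
  rw [← lintegral_image_eq_lintegral_deriv_mul_of_monotoneOn hI
    (fun t ht => (hd t ht).hasDerivAt.hasDerivWithinAt) (hg.monotoneOn I) fun s : ℝ => f s]
  exact hle f

end Torus

/-! ### The weighted estimate -/

theorem LpT2_natCast_pow (φ : ℝ → ℝ → ℂ) {n : ℕ} (hn : n ≠ 0) :
    LpT2 n φ ^ n = ∫⁻ x1 in Ioc 0 (2 * π), ∫⁻ x2 in Ioc 0 (2 * π), ‖φ x1 x2‖ₑ ^ n := by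
  simp only [LpT2, one_div, ENNReal.rpow_inv_natCast_pow hn, rpow_natCast,
    ENNReal.ofReal_pow (norm_nonneg _), ofReal_norm]

theorem LpIT2_natCast_pow (I : Set ℝ) (u : ℝ → ℝ → ℝ → ℂ) {n : ℕ} (hn : n ≠ 0) :
    LpIT2 n I u ^ n =
      ∫⁻ t in I, ∫⁻ x1 in Ioc 0 (2 * π), ∫⁻ x2 in Ioc 0 (2 * π), ‖u t x1 x2‖ₑ ^ n := by
  simp only [LpIT2, one_div, ENNReal.rpow_inv_natCast_pow hn, rpow_natCast,
    ENNReal.ofReal_pow (norm_nonneg _), ofReal_norm]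

theorem zAbs2_le_iff {k : ℤ × ℤ} {N : ℝ} (hN : 0 ≤ N) :
    zAbs2 k ≤ N ↔ (k.1 : ℝ) ^ 2 + (k.2 : ℝ) ^ 2 ≤ N ^ 2 :=
  Real.sqrt_le_left hN

theorem finite_setOf_zAbs2_le (N : ℝ) : {k | zAbs2 k ≤ N}.Finite := by
  refine ((finite_Icc ⌈-N⌉ ⌊N⌋).prod (finite_Icc ⌈-N⌉ ⌊N⌋)).subset fun k hk => ?_
  have h1 : |(k.1 : ℝ)| ≤ N := (Real.abs_le_sqrt (le_add_of_nonneg_right (sq_nonneg _))).trans hk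
  have h2 : |(k.2 : ℝ)| ≤ N := (Real.abs_le_sqrt (le_add_of_nonneg_left (sq_nonneg _))).trans hk
  simp only [mem_prod, mem_Icc, Int.ceil_le, Int.le_floor]
  exact ⟨abs_le.1 h1, abs_le.1 h2⟩

theorem Sop2_eq_freeEvolution (g : ℝ → ℝ) {φ : ℝ → ℝ → ℂ} {K : Finset (ℤ × ℤ)}
    (hK : ∀ k ∉ K, fCoeff2 φ k = 0) (t x1 x2 : ℝ) :
    Sop2 g φ t x1 x2 = freeEvolution (T := 2 * π) K (fCoeff2 φ) (g t, x1, x2) := by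
  have hpi : (π : ℂ) ≠ 0 := mod_cast pi_ne_zero
  rw [Sop2, tsum_eq_sum fun k hk => by rw [hK k hk, mul_zero], freeEvolution]
  refine Finset.sum_congr rfl fun k _ => ?_
  rw [torusChar_apply, mul_comm]
  simp only [paraboloid, fourier_coe_apply, ← Complex.exp_add]
  congr 2
  push_cast
  field_simp
  ring

section TwoPi

local instance fact_two_pi_pos : Fact (0 < 2 * π) := ⟨two_pi_pos⟩

theorem LpIT2_rpow_deriv_mul_Sop2_pow_four {g : ℝ → ℝ} (hg : Monotone g) (I : Set ℝ)
    {φ : ℝ → ℝ → ℂ} {K : Finset (ℤ × ℤ)} (hK : ∀ k ∉ K, fCoeff2 φ k = 0) :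
    LpIT2 4 I (fun t x1 x2 => ((deriv g t ^ ((1:ℝ)/4) : ℝ) : ℂ) * Sop2 g φ t x1 x2) ^ 4 =
      ∫⁻ t in I, ENNReal.ofReal (deriv g t) * ∫⁻ x1 : AddCircle (2 * π),
        ∫⁻ x2 : AddCircle (2 * π), ‖freeEvolution K (fCoeff2 φ) (g t, x1, x2)‖ₑ ^ 4 := by
  have hweight (t : ℝ) :
      ‖((deriv g t ^ ((1:ℝ)/4) : ℝ) : ℂ)‖ₑ ^ 4 = ENNReal.ofReal (deriv g t) := by
    have hd : 0 ≤ deriv g t := hg.deriv_nonneg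
    rw [← ofReal_norm, Complex.norm_of_nonneg (rpow_nonneg hd _),
      ← ENNReal.ofReal_pow (rpow_nonneg hd _), one_div]
    congr 1
    exact_mod_cast rpow_inv_natCast_pow hd four_ne_zero
  have hcircle (f : AddCircle (2 * π) → ℝ≥0∞) : ∫⁻ x in Ioc 0 (2 * π), f x = ∫⁻ x, f x := by
    simpa only [zero_add] using AddCircle.lintegral_preimage (2 * π) 0 f
  have hpow := LpIT2_natCast_pow I
    (fun t x1 x2 => ((deriv g t ^ ((1:ℝ)/4) : ℝ) : ℂ) * Sop2 g φ t x1 x2) four_ne_zero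
  rw [Nat.cast_ofNat] at hpow
  rw [hpow]
  simp only [enorm_mul, mul_pow, hweight, Sop2_eq_freeEvolution g hK,
    lintegral_const_mul' _ _ ENNReal.ofReal_ne_top]
  refine lintegral_congr fun t => congrArg _ ?_
  rw [← hcircle]
  exact lintegral_congr fun x1 =>
    hcircle fun x2 => ‖freeEvolution K (fCoeff2 φ) (g t, x1, x2)‖ₑ ^ 4

theorem sum_enorm_sq_fCoeff2_le (φ : ℝ → ℝ → ℂ) (K : Finset (ℤ × ℤ)) :
    ∑ k ∈ K, ‖fCoeff2 φ k‖ₑ ^ 2 ≤ ENNReal.ofReal (2 * π) ^ 2 * LpT2 2 φ ^ 2 := by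
  have hpow := LpT2_natCast_pow φ two_ne_zero
  rw [Nat.cast_ofNat] at hpow
  rw [hpow]
  exact (ENNReal.sum_le_tsum K).trans (tsum_enorm_sq_fCoeff2_le φ)

theorem exists_LpIT2_rpow_deriv_mul_Sop2_pow_four_le {g : ℝ → ℝ} (hg : Monotone g)
    {I : Set ℝ} (hI : MeasurableSet I) (hd : ∀ t ∈ I, DifferentiableAt ℝ g t)
    (hb : Bornology.IsBounded (g '' I)) {ε : ℝ} (hε : 0 < ε) :
    ∃ C : ℝ, 0 < C ∧ ∀ N : ℝ, 1 ≤ N → ∀ φ : ℝ → ℝ → ℂ,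
      (∀ k : ℤ × ℤ, N < zAbs2 k → fCoeff2 φ k = 0) →
        LpIT2 4 I (fun t x1 x2 => ((deriv g t ^ ((1:ℝ)/4) : ℝ) : ℂ) * Sop2 g φ t x1 x2) ^ 4 ≤
          ENNReal.ofReal (C * N ^ ε) * LpT2 2 φ ^ 4 := by
  obtain ⟨n, hn, hjacobian⟩ := exists_lintegral_deriv_mul_comp_le (2 * π) hg hI hd hb
  obtain ⟨C, hC, hstrichartz⟩ := exists_lintegral_freeEvolution_pow_four_le (2 * π) hε
  refine ⟨n * (2 * π) ^ 4 * C, by positivity, fun N hN φ hφ => ?_⟩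
  let K := (finite_setOf_zAbs2_le N).toFinset
  have hK : ∀ k ∉ K, fCoeff2 φ k = 0 := fun k hk => hφ k (by simpa [K] using hk)
  have hKN : ∀ k ∈ K, (k.1 : ℝ) ^ 2 + (k.2 : ℝ) ^ 2 ≤ N ^ 2 := fun k hk =>
    (zAbs2_le_iff (zero_le_one.trans hN)).1 (by simpa [K] using hk)
  rw [LpIT2_rpow_deriv_mul_Sop2_pow_four hg I hK]
  calc _ ≤ n * ∫⁻ s : AddCircle (2 * π), ∫⁻ x1 : AddCircle (2 * π), ∫⁻ x2 : AddCircle (2 * π),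
          ‖freeEvolution K (fCoeff2 φ) (s, x1, x2)‖ₑ ^ 4 :=
        hjacobian fun s => ∫⁻ x1, ∫⁻ x2, ‖freeEvolution K (fCoeff2 φ) (s, x1, x2)‖ₑ ^ 4
    _ ≤ n * (ENNReal.ofReal (C * N ^ ε) * (∑ k ∈ K, ‖fCoeff2 φ k‖ₑ ^ 2) ^ 2) := by
        gcongr
        exact hstrichartz N hN K hKN _
    _ ≤ n * (ENNReal.ofReal (C * N ^ ε) *
          (ENNReal.ofReal (2 * π) ^ 2 * LpT2 2 φ ^ 2) ^ 2) := by
        gcongr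
        exact sum_enorm_sq_fCoeff2_le φ K
    _ = ENNReal.ofReal (n * (2 * π) ^ 4 * C * N ^ ε) * LpT2 2 φ ^ 4 := by
        rw [mul_assoc _ C, ENNReal.ofReal_mul (by positivity : 0 ≤ n * (2 * π) ^ 4),
          ENNReal.ofReal_mul n.cast_nonneg, ENNReal.ofReal_pow two_pi_pos.le,
          ENNReal.ofReal_natCast]
        ring

end TwoPi

theorem weighted_L4_Strichartz_frequency_localized_general {g : ℝ → ℝ} (hg : Monotone g)
    {I : Set ℝ} (hI : MeasurableSet I) (hd : ∀ t ∈ I, DifferentiableAt ℝ g t)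
    (hb : Bornology.IsBounded (g '' I)) {ε : ℝ} (hε : 0 < ε) :
    ∃ C : ℝ, 0 < C ∧ ∀ N : ℝ, 1 ≤ N → ∀ φ : ℝ → ℝ → ℂ,
      (∀ k : ℤ × ℤ, N < zAbs2 k → fCoeff2 φ k = 0) →
        LpIT2 4 I (fun t x1 x2 => ((deriv g t ^ ((1:ℝ)/4) : ℝ) : ℂ) * Sop2 g φ t x1 x2) ≤
          ENNReal.ofReal (C * N ^ ε) * LpT2 2 φ := by
  obtain ⟨C, hC, hle⟩ :=
    exists_LpIT2_rpow_deriv_mul_Sop2_pow_four_le hg hI hd hb (mul_pos four_pos hε)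
  refine ⟨C ^ ((4 : ℕ) : ℝ)⁻¹, by positivity, fun N hN φ hφ => ?_⟩
  have hN0 : 0 ≤ N := zero_le_one.trans hN
  have hroot : (C ^ ((4 : ℕ) : ℝ)⁻¹ * N ^ ε) ^ 4 = C * N ^ (4 * ε) := by
    rw [mul_pow, rpow_inv_natCast_pow hC.le four_ne_zero, ← rpow_mul_natCast hN0, Nat.cast_ofNat,
      mul_comm ε]
  rw [← ENNReal.pow_le_pow_left_iff four_ne_zero, mul_pow, ← ENNReal.ofReal_pow (by positivity),
    hroot]
  exact hle N hN φ hφ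

/-- Frequency-localized weighted `L⁴` Strichartz estimate on `𝕋²`:
for `φ_N ∈ L²(𝕋²)` with `supp φ̂_N ⊆ B(0,N)` and a finite interval `I` centered at `0`,
`‖g'(t)^{1/4} S(t)φ_N‖_{L⁴(I×𝕋²)} ≤ C(ε,I) N^ε ‖φ_N‖_{L²(𝕋²)}`. -/
theorem weighted_L4_Strichartz_frequency_localized
    (g : ℝ → ℝ) (hg_smooth : ContDiff ℝ (⊤ : ℕ∞) g) (hg_mono : StrictMono g)
    (hg0 : g 0 = 0) (hg'0 : deriv g 0 = 0) :
    ∀ ε : ℝ, 0 < ε → ∀ r : ℝ, 0 < r →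
      ∃ C : ℝ, 0 < C ∧ ∀ N : ℝ, 1 ≤ N →
        ∀ φ : ℝ → ℝ → ℂ, Periodic2 φ → LpT2 2 φ < ⊤ →
          (∀ k : ℤ × ℤ, N < zAbs2 k → fCoeff2 φ k = 0) →
          LpIT2 4 (Icc (-r) r)
              (fun t x1 x2 => ((deriv g t ^ ((1:ℝ)/4) : ℝ) : ℂ) * Sop2 g φ t x1 x2) ≤
            ENNReal.ofReal (C * N ^ ε) * LpT2 2 φ := by
  intro ε hε r _
  have hg : Differentiable ℝ g := hg_smooth.differentiable (by simp)
  obtain ⟨C, hC, hle⟩ := weighted_L4_Strichartz_frequency_localized_general hg_mono.monotone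
    measurableSet_Icc (fun t _ => hg t) (isCompact_Icc.image hg.continuous).isBounded hε
  exact ⟨C, hC, fun N hN φ _ _ => hle N hN φ⟩
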